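/- Let π and ρ be standard irreducible pairs on a finite alphabet A with ρ ∈ E(π). Then Λ(ρ) = Λ(π). -/

import Mathlib

open Equiv

/-- A (labeled) pair on alphabet `A`: two bijections from `A` to positions.
Positions are `Fin (Fintype.card A)`, 0-indexed: position `j : Fin N`
corresponds to the position `j+1 ∈ {1,…,N}` of the paper. -/
abbrev RPair (A : Type*) [Fintype A] := Bool → (A ≃ Fin (Fintype.card A))

variable {A : Type*} [Fintype A]

/-- Irreducibility: `π₁(π₀⁻¹({1,…,k})) = {1,…,k}` only for `k = N`. -/
def PairIrreducible (π : RPair A) : Prop :=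
  ∀ k : Fin (Fintype.card A),
    (∀ x : A, π false x ≤ k → π true x ≤ k) → (k : ℕ) + 1 = Fintype.card A

/-- Type-ε right Rauzy induction sends `π` to `π'`.  Here `zc = π_ε⁻¹(N)` and
`zo = π_{1-ε}⁻¹(N)` are characterized as the letters of maximal position. -/
def RightMove (π π' : RPair A) : Prop :=
  ∃ ε : Bool, ∃ zc zo : A,
    (∀ x : A, π ε x ≤ π ε zc) ∧
    (∀ x : A, π (!ε) x ≤ π (!ε) zo) ∧
    π' ε = π ε ∧
    (∀ b : A, π (!ε) b ≤ π (!ε) zc → π' (!ε) b = π (!ε) b) ∧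
    ((π' (!ε) zo : ℕ) = (π (!ε) zc : ℕ) + 1) ∧
    (∀ b : A, ¬ π (!ε) b ≤ π (!ε) zc → b ≠ zo → (π' (!ε) b : ℕ) = (π (!ε) b : ℕ) + 1)

/-- Type-ε left Rauzy induction sends `π` to `π'`.  Here `ac = π_ε⁻¹(1)` and
`ao = π_{1-ε}⁻¹(1)` are characterized as the letters of minimal position. -/
def LeftMove (π π' : RPair A) : Prop :=
  ∃ ε : Bool, ∃ ac ao : A,
    (∀ x : A, π ε ac ≤ π ε x) ∧
    (∀ x : A, π (!ε) ao ≤ π (!ε) x) ∧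
    π' ε = π ε ∧
    (∀ b : A, π (!ε) ac ≤ π (!ε) b → π' (!ε) b = π (!ε) b) ∧
    ((π' (!ε) ao : ℕ) = (π (!ε) ac : ℕ) - 1) ∧
    (∀ b : A, ¬ π (!ε) ac ≤ π (!ε) b → b ≠ ao → (π' (!ε) b : ℕ) = (π (!ε) b : ℕ) - 1)

/-- The Rauzy class `R(π)`: pairs reachable by right Rauzy inductions. -/
def RClass (π : RPair A) : Set (RPair A) := {ρ | Relation.ReflTransGen RightMove π ρ}

/-- The extended Rauzy class `E(π)`: pairs reachable by left and right Rauzy inductions. -/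
def EClass (π : RPair A) : Set (RPair A) :=
  {ρ | Relation.ReflTransGen (fun x y => RightMove x y ∨ LeftMove x y) π ρ}

/-- `π ∘ ν = (π₀ ∘ ν, π₁ ∘ ν)`. -/
def pairRename (π : RPair A) (ν : Equiv.Perm A) : RPair A := fun ε => ν.trans (π ε)

/-- The renaming set `G(π) = {ν : π ∘ ν ∈ E(π)}`. -/
def renamings (π : RPair A) : Set (Equiv.Perm A) := {ν | pairRename π ν ∈ EClass π}

/-- The non-labeled permutation `π₁ ∘ π₀⁻¹`. -/
def nonlabeled (π : RPair A) : Equiv.Perm (Fin (Fintype.card A)) :=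
  (π false).symm.trans (π true)

/-- The position `1` (smallest). -/
def posFirst (A : Type*) [Fintype A] [Nonempty A] : Fin (Fintype.card A) :=
  ⟨0, Fintype.card_pos⟩

/-- The position `N` (largest). -/
def posLast (A : Type*) [Fintype A] [Nonempty A] : Fin (Fintype.card A) :=
  ⟨Fintype.card A - 1, Nat.sub_lt Fintype.card_pos Nat.one_pos⟩

/-- A pair is standard if `π₀(π₁⁻¹(1)) = π₁(π₀⁻¹(1)) = N`. -/
def PairStandard [Nonempty A] (π : RPair A) : Prop :=
  π false ((π true).symm (posFirst A)) = posLast A ∧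
  π true ((π false).symm (posFirst A)) = posLast A

/-- `S` is the permutation `S(π)` of the paper. -/
def IsS [Nonempty A] (π : RPair A) (S : Equiv.Perm A) : Prop :=
  ∀ b : A,
    (π true b = posFirst A → S b = (π false).symm (posFirst A)) ∧
    (π true b ≠ posFirst A →
      (((π true b : ℕ) = (π true ((π false).symm (posLast A)) : ℕ) + 1 →
        (π false (S b) : ℕ) = (π false ((π true).symm (posLast A)) : ℕ) + 1) ∧
      ((π true b : ℕ) ≠ (π true ((π false).symm (posLast A)) : ℕ) + 1 →
        (π false (S b) : ℕ) =
          (π false ((π true).symm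
            ⟨(π true b : ℕ) - 1,
              Nat.lt_of_le_of_lt (Nat.sub_le _ _) (π true b).isLt⟩) : ℕ) + 1)))

/-- The marked letter `X(π) = π₀⁻¹(1)`. -/
def XOf [Nonempty A] (π : RPair A) : A := (π false).symm (posFirst A)

/-- `Q` is the permutation `Q(π)` of the paper (constructed from `S = S(π)`). -/
def IsQ [Nonempty A] (π : RPair A) (S Q : Equiv.Perm A) : Prop :=
  Q (XOf π) = XOf π ∧
  ∀ b : A, b ≠ XOf π →
    (S b = XOf π → Q b = S (S b)) ∧ (S b ≠ XOf π → Q b = S b)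

/-- `Λ`: the multiset of cardinalities of the orbits of `Q` on `A ∖ {X}`
(for `Q` fixing `X`): the nontrivial cycle lengths of `Q` together with one `1`
for each fixed point of `Q` other than `X`. -/
def lamOf [DecidableEq A] (Q : Equiv.Perm A) : Multiset ℕ :=
  Q.cycleType + Multiset.replicate ((Finset.univ.filter fun a => Q a = a).card - 1) 1

/-- The centralizer `Z(π)` of `(X(π), Q(π))`. -/
def ZOf [Nonempty A] (π : RPair A) (Q : Equiv.Perm A) : Set (Equiv.Perm A) :=
  {ν | ν (XOf π) = XOf π ∧ ν⁻¹ * Q * ν = Q}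

def SR {A : Type*} (N : ℕ) (p q : A → ℕ) (b d : A) : Prop :=
  (q b = 0 ∧ p d = 0) ∨ ∃ c, q c + 1 = q b ∧
    ((p c + 1 ≠ N ∧ p d = p c + 1) ∨ (p c + 1 = N ∧ ∃ e, q e + 1 = N ∧ p d = p e + 1))

theorem SR_uniq {A : Type*} (N : ℕ) (p q : A → ℕ) (hp : Function.Injective p)
    (hq : Function.Injective q) (b d d' : A) (h : SR N p q b d) (h' : SR N p q b d') : d = d' := by
  apply hp
  unfold SR at h h'
  rcases h with h | ⟨c, hc, h⟩ <;> rcases h' with h' | ⟨c', hc', h'⟩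
  · omega
  · omega
  · omega
  · have : c = c' := hq (by omega)
    subst this
    rcases h with h | ⟨h, e, he, h1⟩ <;> rcases h' with h' | ⟨h', e', he', h1'⟩
    · omega
    · omega
    · omega
    · have : e = e' := hq (by omega)
      subst this
      omega

theorem isS_iff {A : Type*} [Fintype A] [Nonempty A] (π : RPair A) (S : Equiv.Perm A) :
    IsS π S ↔ ∀ b, SR (Fintype.card A) (fun x => (π false x : ℕ)) (fun x => (π true x : ℕ)) b (S b) := by
  have hpos : 0 < Fintype.card A := Fintype.card_pos
  have hz1 : ((π true ((π true).symm (posLast A)) : Fin _) : ℕ) + 1 = Fintype.card A := by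
    simp [posLast]; omega
  have hz0 : ((π false ((π false).symm (posLast A)) : Fin _) : ℕ) + 1 = Fintype.card A := by
    simp [posLast]; omega
  have ha0 : ((π false ((π false).symm (posFirst A)) : Fin _) : ℕ) = 0 := by
    simp [posFirst]
  have hi0 : ∀ x y, ((π false x : Fin _) : ℕ) = (π false y : Fin _) → x = y :=
    fun x y h => (π false).injective (Fin.ext h)
  have hi1 : ∀ x y, ((π true x : Fin _) : ℕ) = (π true y : Fin _) → x = y :=
    fun x y h => (π true).injective (Fin.ext h)
  have hf : ∀ b, π true b = posFirst A ↔ ((π true b : Fin _) : ℕ) = 0 := fun b => by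
    rw [Fin.ext_iff]; rfl
  unfold IsS
  apply forall_congr'
  intro b
  simp only [ne_eq, hf]
  have hc : ((π true ((π true).symm ⟨(π true b : ℕ) - 1,
              Nat.lt_of_le_of_lt (Nat.sub_le _ _) (π true b).isLt⟩) : Fin _) : ℕ) = (π true b : ℕ) - 1 := by
    simp
  generalize (π true).symm ⟨(π true b : ℕ) - 1,
              Nat.lt_of_le_of_lt (Nat.sub_le _ _) (π true b).isLt⟩ = c at *
  generalize (π true).symm (posLast A) = z1 at *
  generalize (π false).symm (posLast A) = z0 at *
  generalize (π false).symm (posFirst A) = a0 at *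
  unfold SR
  beta_reduce
  clear hf hpos
  by_cases h0 : ((π true b : Fin _) : ℕ) = 0
  · constructor
    · intro h
      have h := h.1 h0
      subst h
      exact Or.inl ⟨h0, ha0⟩
    · rintro (h | ⟨c', h, _⟩)
      · exact ⟨fun _ => hi0 _ _ (h.2.trans ha0.symm), fun h' => absurd h0 h'⟩
      · omega
  · by_cases h1 : ((π true b : Fin _) : ℕ) = (π true z0 : Fin _) + 1
    · have : c = z0 := hi1 _ _ (by omega)
      subst this
      constructor
      · intro h
        exact Or.inr ⟨c, h1.symm, Or.inr ⟨hz0, z1, hz1, (h.2 h0).1 h1⟩⟩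
      · rintro (h | ⟨c', h, h' | ⟨h', e, he, h''⟩⟩)
        · omega
        · have := hi1 c' c (by omega)
          subst this; omega
        · have := hi1 e z1 (by omega)
          subst this
          exact ⟨fun h => absurd h h0, fun _ => ⟨fun _ => h'', fun h => absurd h1 h⟩⟩
    · have hcz : c ≠ z0 := by rintro rfl; omega
      have hcN : ((π false c : Fin _) : ℕ) + 1 ≠ Fintype.card A := by
        intro h; exact hcz (hi0 _ _ (by omega))
      constructor
      · intro h
        exact Or.inr ⟨c, by omega, Or.inl ⟨hcN, (h.2 h0).2 h1⟩⟩
      · rintro (h | ⟨c', h, h'⟩)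
        · omega
        · have := hi1 c' c (by clear h'; omega)
          subst this
          refine ⟨fun h => absurd h h0, fun _ => ⟨fun h => absurd h h1, fun _ => ?_⟩⟩
          rcases h' with h' | h'
          · exact h'.2
          · omega

theorem right0 {A : Type*} (N : ℕ) (p q q' : A → ℕ) (hp : Function.Injective p)
    (hq : Function.Injective q) (hpN : ∀ x, p x < N) (hqN : ∀ x, q x < N)
    (hqs : ∀ i < N, ∃ x, q x = i) (zc zo : A)
    (hzc : p zc + 1 = N) (hzo : q zo + 1 = N) (hne : zc ≠ zo)
    (h1 : ∀ b, q b ≤ q zc → q' b = q b) (h2 : q' zo = q zc + 1)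
    (h3 : ∀ b, ¬ q b ≤ q zc → b ≠ zo → q' b = q b + 1) (b d : A)
    (h : SR N p q b d) : SR N p q' b d := by
  have hlt : q zc < q zo := by
    have := hqN zc
    have : q zc ≠ q zo := fun h => hne (hq h)
    omega
  obtain ⟨y, hy⟩ := hqs (q zo - 1) (by omega)
  have hc0 := h1 zc le_rfl
  unfold SR at *
  by_cases hyz : y = zc
  · have : ∀ b, q' b = q b := by
      intro b
      by_cases hb : q b ≤ q zc
      · exact h1 b hb
      · have : b = zo := hq (by have := hqN b; subst hyz; omega)
        subst this; subst hyz; omega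
    simpa [this] using h
  · have hyc : q y ≠ q zc := fun h => hyz (hq h)
    have hyo : y ≠ zo := by rintro rfl; omega
    have hy' := h3 y (by omega) hyo
    have hpy : p y ≠ p zc := fun h => hyz (hp h)
    rcases h with h | ⟨c, hc, h⟩
    · left; rw [h1 b (by omega)]; exact h
    · right
      by_cases hb : b = zo
      · subst hb
        have : c = y := hq (by omega)
        subst this
        refine ⟨zc, by omega, Or.inr ⟨hzc, c, by omega, ?_⟩⟩
        omega
      · by_cases hczc : c = zc
        · subst hczc
          refine ⟨zo, ?_, Or.inl ⟨?_, ?_⟩⟩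
          · have := h3 b (by omega) hb; omega
          · intro h; exact hne (hp (by omega))
          · rcases h with h | ⟨h, e, he, h'⟩
            · omega
            · have := hq (a₁ := e) (a₂ := zo) (by omega)
              subst this; exact h'
        · have : q c ≠ q zc := fun h => hczc (hq h)
          refine ⟨c, ?_, ?_⟩
          · by_cases hle : q b ≤ q zc
            · rw [h1 b hle, h1 c (by omega), hc]
            · rw [h3 b hle hb, h3 c (by omega) (by rintro rfl; have := hqN b; omega), hc]
          · rcases h with h | h
            · exact Or.inl h
            · exact absurd (hp (by omega)) hczc

theorem right1 {A : Type*} (N : ℕ) (p q p' : A → ℕ) (hp : Function.Injective p)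
    (hq : Function.Injective q) (hpN : ∀ x, p x < N) (hqN : ∀ x, q x < N)
    (hps : ∀ i < N, ∃ x, p x = i) (zc zo : A)
    (hzc : q zc + 1 = N) (hzo : p zo + 1 = N) (hne : zc ≠ zo)
    (h1 : ∀ b, p b ≤ p zc → p' b = p b) (h2 : p' zo = p zc + 1)
    (h3 : ∀ b, ¬ p b ≤ p zc → b ≠ zo → p' b = p b + 1) (b d : A)
    (h : SR N p q b d) : SR N p' q b d := by
  have hlt : p zc < p zo := by
    have := hpN zc
    have : p zc ≠ p zo := fun h => hne (hp h)
    omega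
  obtain ⟨y, hy⟩ := hps (p zo - 1) (by omega)
  have hc0 := h1 zc le_rfl
  unfold SR at *
  by_cases hyz : y = zc
  · have : ∀ b, p' b = p b := by
      intro b
      by_cases hb : p b ≤ p zc
      · exact h1 b hb
      · have : b = zo := hp (by have := hpN b; subst hyz; omega)
        subst this; subst hyz; omega
    simpa [this] using h
  · have hyc : p y ≠ p zc := fun h => hyz (hp h)
    have hyo : y ≠ zo := by rintro rfl; omega
    have hy' := h3 y (by omega) hyo
    rcases h with h | ⟨c, hc, h⟩
    · left; rw [h1 d (by omega)]; exact h
    · right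
      refine ⟨c, hc, ?_⟩
      rcases h with ⟨h, hd⟩ | ⟨h, e, he, hd⟩
      · by_cases hdo : d = zo
        · subst hdo
          have : c = y := hp (by omega)
          subst this
          exact Or.inr ⟨by omega, zc, hzc, by omega⟩
        · left
          have hczc : c ≠ zc := by rintro rfl; have := hqN b; omega
          have : p c ≠ p zc := fun h => hczc (hp h)
          have hdN : p d ≠ p zo := fun h => hdo (hp h)
          have := hpN d
          by_cases hle : p c ≤ p zc
          · rw [h1 c hle, h1 d (by omega)]; omega
          · rw [h3 c hle (by rintro rfl; omega), h3 d (by omega) hdo]; omega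
      · have : c = zo := hp (by omega)
        subst this
        have : e = zc := hq (by omega)
        subst this
        left
        by_cases hdo : d = c
        · subst hdo; exfalso; apply hyz; apply hp; omega
        · have := h3 d (by omega) hdo
          omega

theorem left0 {A : Type*} [DecidableEq A] (N : ℕ) (p q q' : A → ℕ) (hp : Function.Injective p)
    (hq : Function.Injective q) (hpN : ∀ x, p x < N) (hqN : ∀ x, q x < N)
    (ac ao y : A) (hac : p ac = 0) (hao : q ao = 0) (hy : q y = 1) (hya : y ≠ ac) (hne : ac ≠ ao)
    (h1 : ∀ b, q ac ≤ q b → q' b = q b) (h2 : q' ao = q ac - 1)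
    (h3 : ∀ b, ¬ q ac ≤ q b → b ≠ ao → q' b = q b - 1) (S : Equiv.Perm A)
    (h : ∀ b, SR N p q b (S b)) (b : A) :
    SR N p q' b ((S * Equiv.swap ao ac * Equiv.swap y ac) b) := by
  have hS0 : S ao = ac := by
    rcases h ao with h | ⟨c, hc, _⟩
    · exact hp (by omega)
    · omega
  have hyo : y ≠ ao := by rintro rfl; omega
  have hqy : q y ≠ q ac := fun h => hya (hq h)
  have hqo : q ao ≠ q ac := fun h => hne (hq h.symm)
  have hy' := h3 y (by omega) hyo
  have hac' := h1 ac le_rfl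
  have hlast : ∀ e, q e + 1 = N → ∃ e', q' e' + 1 = N ∧ e' = e := by
    intro e he
    refine ⟨e, ?_, rfl⟩
    have := hqN ac
    rw [h1 e (by omega), he]
  have key : ∀ c d, ((p c + 1 ≠ N ∧ p d = p c + 1) ∨ (p c + 1 = N ∧ ∃ e, q e + 1 = N ∧ p d = p e + 1)) →
     ((p c + 1 ≠ N ∧ p d = p c + 1) ∨ (p c + 1 = N ∧ ∃ e, q' e + 1 = N ∧ p d = p e + 1)) := by
    rintro c d (h | ⟨h, e, he, h'⟩)
    · exact Or.inl h
    · obtain ⟨e', he', rfl⟩ := hlast e he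
      exact Or.inr ⟨h, e', he', h'⟩
  simp only [Equiv.Perm.mul_apply]
  by_cases hb1 : b = y
  · subst hb1
    rw [Equiv.swap_apply_left, Equiv.swap_apply_right, hS0]
    left; omega
  by_cases hb2 : b = ac
  · subst hb2
    rw [Equiv.swap_apply_right, Equiv.swap_apply_of_ne_of_ne hyo hya]
    rcases h y with h | ⟨c, hc, h⟩
    · omega
    · have : c = ao := hq (by omega)
      subst this
      exact Or.inr ⟨c, by omega, key _ _ h⟩
  by_cases hb3 : b = ao
  · subst hb3
    rw [Equiv.swap_apply_of_ne_of_ne (Ne.symm hyo) hb2, Equiv.swap_apply_left]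
    rcases h ac with h | ⟨c, hc, h⟩
    · omega
    · have hcb : c ≠ b := by
        rintro rfl; omega
      have := h3 c (by omega) hcb
      have h5 : q c ≠ q b := fun h => hcb (hq h)
      have h6 : q' c + 1 = q' b := by clear h; omega
      exact Or.inr ⟨c, h6, key _ _ h⟩
  · rw [Equiv.swap_apply_of_ne_of_ne hb1 hb2, Equiv.swap_apply_of_ne_of_ne hb3 hb2]
    have e1 : q b ≠ q ao := fun h => hb3 (hq h)
    have e2 : q b ≠ q y := fun h => hb1 (hq h)
    have e3 : q b ≠ q ac := fun h => hb2 (hq h)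
    rcases h b with h | ⟨c, hc, h⟩
    · omega
    · refine Or.inr ⟨c, ?_, key _ _ h⟩
      have : c ≠ ao := by rintro rfl; omega
      by_cases hle : q ac ≤ q c
      · rw [h1 c hle, h1 b (by omega), hc]
      · rw [h3 c hle this, h3 b (by omega) hb3]; omega

theorem left1 {A : Type*} [DecidableEq A] (N : ℕ) (p q p' : A → ℕ) (hp : Function.Injective p)
    (hq : Function.Injective q) (hpN : ∀ x, p x < N) (hqN : ∀ x, q x < N)
    (ac ao y : A) (hac : q ac = 0) (hao : p ao = 0) (hy : p y = 1) (hya : y ≠ ac) (hne : ac ≠ ao)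
    (h1 : ∀ b, p ac ≤ p b → p' b = p b) (h2 : p' ao = p ac - 1)
    (h3 : ∀ b, ¬ p ac ≤ p b → b ≠ ao → p' b = p b - 1) (S : Equiv.Perm A)
    (h : ∀ b, SR N p q b (S b)) (b : A) :
    SR N p' q b ((Equiv.swap ac ao * Equiv.swap y ao * S) b) := by
  have hyo : y ≠ ao := by rintro rfl; omega
  have hpy : p y ≠ p ac := fun h => hya (hp h)
  have hpo : p ao ≠ p ac := fun h => hne (hp h.symm)
  have hy' := h3 y (by omega) hyo
  have hac' := h1 ac le_rfl
  have hacN := hpN ac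
  simp only [Equiv.Perm.mul_apply]
  generalize hd : S b = d
  have hb := h b
  rw [hd] at hb
  have key : ∀ c d, p d = p c + 1 → 
      p' ((Equiv.swap ac ao) ((Equiv.swap y ao) d)) = p' c + 1 := by
    intro c d hcd
    have hdo : d ≠ ao := by rintro rfl; omega
    by_cases hd1 : d = y
    · subst hd1
      have : c = ao := hp (by omega)
      subst this
      rw [Equiv.swap_apply_left, Equiv.swap_apply_right]; omega
    have hco : c ≠ ao := by
      rintro rfl; exact hd1 (hp (by omega))
    by_cases hd2 : d = ac
    · subst hd2
      rw [Equiv.swap_apply_of_ne_of_ne (Ne.symm hya) hdo, Equiv.swap_apply_left]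
      have := h3 c (by omega) hco
      have : p c ≠ p ao := fun h => hco (hp h)
      omega
    rw [Equiv.swap_apply_of_ne_of_ne hd1 hdo, Equiv.swap_apply_of_ne_of_ne hd2 hdo]
    have : p c ≠ p ao := fun h => hco (hp h)
    have : p d ≠ p ac := fun h => hd2 (hp h)
    by_cases hle : p ac ≤ p c
    · rw [h1 c hle, h1 d (by omega), hcd]
    · rw [h3 c hle hco, h3 d (by omega) hdo]; omega
  have hN : ∀ c, p' c + 1 = N ↔ p c + 1 = N := by
    intro c
    by_cases hle : p ac ≤ p c
    · rw [h1 c hle]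
    · by_cases hco : c = ao
      · subst hco; omega
      · have := h3 c hle hco; omega
  rcases hb with hb | ⟨c, hc, hb⟩
  · left
    have : d = ao := hp (by omega)
    subst this
    rw [Equiv.swap_apply_right, Equiv.swap_apply_of_ne_of_ne hya hyo]
    omega
  · right
    refine ⟨c, hc, ?_⟩
    rcases hb with ⟨hb, hb'⟩ | ⟨hb, e, he, hb'⟩
    · exact Or.inl ⟨by rwa [Ne, hN], key _ _ hb'⟩
    · exact Or.inr ⟨by rwa [hN], e, he, key _ _ hb'⟩

theorem lam_conj {A : Type*} [Fintype A] [DecidableEq A] (Q Q' : Equiv.Perm A)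
    (h : Q'.cycleType = Q.cycleType) : lamOf Q' = lamOf Q := by
  unfold lamOf
  have key : ∀ R : Equiv.Perm A, (Finset.univ.filter fun a => R a = a).card
      = Fintype.card A - R.cycleType.sum := by
    intro R
    rw [Equiv.Perm.sum_cycleType, ← Finset.card_compl]
    congr 1
    ext a; simp
  rw [key, key, h]

def RInv {A : Type*} [Fintype A] [DecidableEq A] [Nonempty A] (L : Multiset ℕ) (π : RPair A) : Prop :=
  ∃ S : Equiv.Perm A,
    (∀ b, SR (Fintype.card A) (fun x => (π false x : ℕ)) (fun x => (π true x : ℕ)) b (S b)) ∧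
    ∀ a0 a1 : A, (π false a0 : ℕ) = 0 → (π true a1 : ℕ) = 0 → lamOf (S * Equiv.swap a1 a0) = L

theorem pos_ex {A : Type*} [Fintype A] (f : A ≃ Fin (Fintype.card A)) (i : ℕ)
    (hi : i < Fintype.card A) : ∃ x, (f x : ℕ) = i := ⟨f.symm ⟨i, hi⟩, by simp⟩

theorem pos_inj {A : Type*} [Fintype A] (f : A ≃ Fin (Fintype.card A)) :
    Function.Injective (fun x => (f x : ℕ)) := fun _ _ h => f.injective (Fin.ext h)

theorem pos_max {A : Type*} [Fintype A] (f : A ≃ Fin (Fintype.card A)) (z : A)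
    (h : ∀ x, f x ≤ f z) : (f z : ℕ) + 1 = Fintype.card A := by
  have hz := (f z).isLt
  obtain ⟨x, hx⟩ := pos_ex f (Fintype.card A - 1) (by omega)
  have := h x
  rw [Fin.le_def] at this
  omega

theorem pos_min {A : Type*} [Fintype A] (f : A ≃ Fin (Fintype.card A)) (z : A)
    (h : ∀ x, f z ≤ f x) : (f z : ℕ) = 0 := by
  have hz := (f z).isLt
  obtain ⟨x, hx⟩ := pos_ex f 0 (by omega)
  have := h x
  rw [Fin.le_def] at this
  omega

theorem inv_right {A : Type*} [Fintype A] [DecidableEq A] [Nonempty A] (L : Multiset ℕ)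
    (π π' : RPair A) (hm : RightMove π π') (h : RInv L π) : RInv L π' := by
  obtain ⟨ε, zc, zo, hzc, hzo, he, h1, h2, h3⟩ := hm
  obtain ⟨S, hS, hL⟩ := h
  have hzc := pos_max _ _ hzc
  have hzo := pos_max _ _ hzo
  have hne : zc ≠ zo := by
    rintro rfl
    have := (π' (!ε) zc).isLt
    omega
  have hfirst : ∀ a, (π' (!ε) a : ℕ) = 0 → (π (!ε) a : ℕ) = 0 := by
    intro a ha
    by_cases hle : π (!ε) a ≤ π (!ε) zc
    · rw [← h1 a hle]; exact ha
    · by_cases hao : a = zo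
      · subst hao; omega
      · have := h3 a hle hao; omega
  cases ε
  · simp only [Bool.not_false] at *
    refine ⟨S, fun b => ?_, fun a0 a1 h0 h1 => hL a0 a1 (by rw [← he]; exact h0) (hfirst a1 h1)⟩
    rw [he]
    exact right0 _ _ (fun x => (π true x : ℕ)) _ (pos_inj _) (pos_inj _) (fun x => (π false x).isLt)
      (fun x => (π true x).isLt) (pos_ex _) zc zo hzc hzo hne (fun b hb => congrArg Fin.val (h1 b hb)) h2 h3 _ _ (hS b)
  · simp only [Bool.not_true] at *
    refine ⟨S, fun b => ?_, fun a0 a1 h0 h1 => hL a0 a1 (hfirst a0 h0) (by rw [← he]; exact h1)⟩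
    rw [he]
    exact right1 _ (fun x => (π false x : ℕ)) _ _ (pos_inj _) (pos_inj _) (fun x => (π false x).isLt)
      (fun x => (π true x).isLt) (pos_ex _) zc zo hzc hzo hne (fun b hb => congrArg Fin.val (h1 b hb)) h2 h3 _ _ (hS b)

theorem inv_left {A : Type*} [Fintype A] [DecidableEq A] [Nonempty A] (hN : 2 ≤ Fintype.card A)
    (L : Multiset ℕ)
    (π π' : RPair A) (hm : LeftMove π π') (h : RInv L π) : RInv L π' := by
  obtain ⟨ε, ac, ao, hac, hao, he, h1, h2, h3⟩ := hm
  have hac := pos_min _ _ hac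
  have hao := pos_min _ _ hao
  obtain ⟨y, hy⟩ := pos_ex (π (!ε)) 1 (by omega)
  by_cases htriv : (π (!ε) ac : ℕ) ≤ 1
  · have : π' (!ε) = π (!ε) := by
      ext b
      by_cases hle : π (!ε) ac ≤ π (!ε) b
      · rw [h1 b hle]
      · rw [Fin.le_def] at hle
        have : b = ao := pos_inj (π (!ε)) (by show (π (!ε) b : ℕ) = π (!ε) ao; omega)
        subst this; omega
    have : π' = π := by
      funext δ
      cases ε <;> cases δ <;> first | exact he | exact this
    rw [this]; exact h
  obtain ⟨S, hS, hL⟩ := h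
  have hya : y ≠ ac := by rintro rfl; omega
  have hyo : y ≠ ao := by rintro rfl; omega
  have hne : ac ≠ ao := by rintro rfl; omega
  have hfirst : ∀ a, (π' (!ε) a : ℕ) = 0 → a = y := by
    intro a ha
    apply pos_inj (π (!ε))
    show (π (!ε) a : ℕ) = π (!ε) y
    by_cases hle : π (!ε) ac ≤ π (!ε) a
    · rw [← h1 a hle]; rw [Fin.le_def, ← h1 a hle] at hle; omega
    · by_cases hao : a = ao
      · subst hao; omega
      · have := h3 a hle hao
        have : (π (!ε) a : ℕ) ≠ π (!ε) ao := fun h => hao (pos_inj _ h)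
        omega
  cases ε
  · simp only [Bool.not_false] at *
    refine ⟨S * Equiv.swap ao ac * Equiv.swap y ac, fun b => ?_, fun a0 a1 g0 g1 => ?_⟩
    · rw [he]
      exact left0 _ _ (fun x => (π true x : ℕ)) _ (pos_inj _) (pos_inj _) (fun x => (π false x).isLt)
        (fun x => (π true x).isLt) ac ao y hac hao hy hya hne (fun b hb => congrArg Fin.val (h1 b hb)) h2 h3 S hS b
    · rw [hfirst a1 g1, show a0 = ac from pos_inj (π false) (by rw [← he] at *; simp only; omega)]
      rw [mul_assoc, Equiv.swap_mul_self, mul_one]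
      exact hL _ _ hac hao
  · simp only [Bool.not_true] at *
    refine ⟨Equiv.swap ac ao * Equiv.swap y ao * S, fun b => ?_, fun a0 a1 g0 g1 => ?_⟩
    · rw [he]
      exact left1 _ (fun x => (π false x : ℕ)) _ _ (pos_inj _) (pos_inj _) (fun x => (π false x).isLt)
        (fun x => (π true x).isLt) ac ao y hac hao hy hya hne (fun b hb => congrArg Fin.val (h1 b hb)) h2 h3 S hS b
    · rw [hfirst a0 g0, show a1 = ac from pos_inj (π true) (by rw [← he] at *; simp only; omega)]
      rw [← hL _ _ hao hac]
      apply lam_conj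
      have : Equiv.swap ac ao * Equiv.swap y ao * S * Equiv.swap ac y =
          (Equiv.swap ac ao * Equiv.swap y ao) * (S * Equiv.swap ac ao) * (Equiv.swap ac ao * Equiv.swap y ao)⁻¹ := by
        have e : Equiv.swap ac y = Equiv.swap ac ao * (Equiv.swap y ao * Equiv.swap ac ao) := by
          have := Equiv.swap_mul_swap_mul_swap (x := y) (y := ao) (z := ac) hyo hya
          ext x
          simp only [Equiv.Perm.mul_apply, Equiv.swap_apply_def]
          grind
        rw [e]
        simp [mul_assoc]
      rw [this, Equiv.Perm.cycleType_conj]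

theorem Q_eq {A : Type*} [Fintype A] [DecidableEq A] [Nonempty A] (π : RPair A)
    (S Q : Equiv.Perm A) (hS : IsS π S) (hQ : IsQ π S Q) (a0 a1 : A)
    (h0 : (π false a0 : ℕ) = 0) (h1 : (π true a1 : ℕ) = 0) : Q = S * Equiv.swap a1 a0 := by
  have hX : XOf π = a0 := by
    unfold XOf
    rw [Equiv.symm_apply_eq]
    exact Fin.ext h0.symm
  have hS1 : S a1 = a0 := by
    rw [← hX]; exact (hS a1).1 (Fin.ext h1)
  obtain ⟨q1, q2⟩ := hQ
  rw [hX] at q1 q2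
  ext b
  rw [Equiv.Perm.mul_apply]
  by_cases hb : b = a0
  · subst hb; rw [Equiv.swap_apply_right, hS1, q1]
  · by_cases hb1 : b = a1
    · subst hb1; rw [Equiv.swap_apply_left, (q2 b hb).1 hS1, hS1]
    · rw [Equiv.swap_apply_of_ne_of_ne hb1 hb, (q2 b hb).2]
      intro h; exact hb1 (S.injective (h.trans hS1.symm))

theorem inv_chain {A : Type*} [Fintype A] [DecidableEq A] [Nonempty A] (hN : 2 ≤ Fintype.card A)
    (L : Multiset ℕ) (π ρ : RPair A)
    (hρ : Relation.ReflTransGen (fun x y => RightMove x y ∨ LeftMove x y) π ρ)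
    (h : RInv L π) : RInv L ρ := by
  induction hρ with
  | refl => exact h
  | tail _ hm ih => exact hm.elim (fun hm => inv_right L _ _ hm ih) (fun hm => inv_left hN L _ _ hm ih)

/-- if `π, ρ` are standard irreducible pairs with `ρ ∈ E(π)`, then
`Λ(ρ) = Λ(π)`. -/
theorem stmt5 {A : Type*} [Fintype A] [DecidableEq A] [Nonempty A]
    (hN : 2 ≤ Fintype.card A) (π ρ : RPair A) (hπ : PairIrreducible π)
    (hπs : PairStandard π) (hρs : PairStandard ρ) (hρ : ρ ∈ EClass π)
    (S S' Q Q' : Equiv.Perm A)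
    (hS : IsS π S) (hS' : IsS ρ S') (hQ : IsQ π S Q) (hQ' : IsQ ρ S' Q') :
    lamOf Q' = lamOf Q := by
  have hstart : RInv (lamOf Q) π :=
    ⟨S, (isS_iff π S).1 hS, fun a0 a1 h0 h1 => by rw [Q_eq π S Q hS hQ a0 a1 h0 h1]⟩
  have hend : RInv (lamOf Q) ρ := by
    exact inv_chain hN _ π ρ hρ hstart
  obtain ⟨T, hT, hL⟩ := hend
  have : T = S' := Equiv.ext fun b =>
    SR_uniq _ _ _ (pos_inj _) (pos_inj _) b _ _ (hT b) ((isS_iff ρ S').1 hS' b)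
  subst this
  obtain ⟨a0, h0⟩ := pos_ex (ρ false) 0 (by omega)
  obtain ⟨a1, h1⟩ := pos_ex (ρ true) 0 (by omega)
  rw [Q_eq ρ T Q' hS' hQ' a0 a1 h0 h1]
  exact hL a0 a1 h0 h1
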